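/- For every n ≥ 0, the following identity of polynomials in q₊,q₋ holds: Σ_{π ∈ P₂^{sym}(2n)} q₋^{c₋(π)} q₊^{l_c(π)} = Σ_{π ∈ P₂(2n)} (1+q₋)^{c(π)} (2q₊)^{n−c(π)}, where P₂(2n) is the set of pair partitions (perfect matchings) of {1,…,2n} and, for π ∈ P₂(2n), c(π) is the number of cycles (connected components) of the union of π with the unique noncrossing pair partition π̂ of {1,…,2n} having the same set of left legs as π, viewed as a 2-regular multigraph on {1,…,2n}. -/

import Mathlib

noncomputable section

namespace TypeB

/-! ### Symmetric pair partitions of [±2n] and their cycles -/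

/-- Negation of a set of integers. -/
def negSet (B : Set ℤ) : Set ℤ := (fun x : ℤ => -x) '' B

/-- The set [±m] = {−m,…,−1,1,…,m} ⊆ ℤ. -/
def pmSet (m : ℕ) : Set ℤ := {i | i ≠ 0 ∧ |i| ≤ (m : ℤ)}

/-- π is a set partition of S. -/
def IsPartitionOn (S : Set ℤ) (π : Set (Set ℤ)) : Prop :=
  (∀ B ∈ π, B ⊆ S ∧ B.Nonempty) ∧ (∀ x ∈ S, ∃! B, B ∈ π ∧ x ∈ B)

def IsPairB (B : Set ℤ) : Prop := ∃ a b : ℤ, a ≠ b ∧ B = {a, b}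

def IsSingleB (B : Set ℤ) : Prop := ∃ a : ℤ, B = {a}

/-- P₂^{sym}(2n): partitions of [±2n] into pairs, invariant under negation, with no
pair equal to its own negation. -/
def P2sym (n : ℕ) (π : Set (Set ℤ)) : Prop :=
  IsPartitionOn (pmSet (2 * n)) π ∧ (∀ B ∈ π, IsPairB B) ∧
  (∀ B ∈ π, negSet B ∈ π) ∧ (∀ B ∈ π, negSet B ≠ B)

/-- Noncrossing partitions: no i < j < k < l with i,k in one block and j,l in another. -/
def NonCrossing (π : Set (Set ℤ)) : Prop :=
  ¬ ∃ (i j k l : ℤ) (B C : Set ℤ), B ∈ π ∧ C ∈ π ∧ B ≠ C ∧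
    i < j ∧ j < k ∧ k < l ∧ i ∈ B ∧ k ∈ B ∧ j ∈ C ∧ l ∈ C

/-- Right legs of positive pairs. -/
def posRightLegs (π : Set (Set ℤ)) : Set ℤ :=
  {b | ∃ a : ℤ, a < b ∧ ({a, b} : Set ℤ) ∈ π ∧ -a < b}

/-- Left legs of negative pairs. -/
def negLeftLegs (π : Set (Set ℤ)) : Set ℤ :=
  {a | ∃ b : ℤ, a < b ∧ ({a, b} : Set ℤ) ∈ π ∧ ¬(-a < b)}

/-- Pairs of ρ do not cover singletons of ρ. -/
def NoCoveredSingleton (ρ : Set (Set ℤ)) : Prop :=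
  ¬ ∃ a b c : ℤ, a < c ∧ c < b ∧ ({a, b} : Set ℤ) ∈ ρ ∧ ({c} : Set ℤ) ∈ ρ

/-- The defining properties of the noncrossing partition π̂ of [±m] associated with π:
a partition into pairs and singletons, noncrossing, symmetric, with every block inside
{1,…,m} or {−m,…,−1}, having the same right legs of positive pairs and the same left
legs of negative pairs as π, and whose pairs do not cover singletons. -/
def HatProps (m : ℕ) (π ρ : Set (Set ℤ)) : Prop :=
  IsPartitionOn (pmSet m) ρ ∧
  (∀ B ∈ ρ, IsPairB B ∨ IsSingleB B) ∧
  NonCrossing ρ ∧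
  (∀ B ∈ ρ, negSet B ∈ ρ) ∧
  (∀ B ∈ ρ, (∀ x ∈ B, 0 < x) ∨ (∀ x ∈ B, x < 0)) ∧
  posRightLegs ρ = posRightLegs π ∧
  negLeftLegs ρ = negLeftLegs π ∧
  NoCoveredSingleton ρ

open Classical in
/-- The partition π̂ associated with π (it exists and is unique). -/
def hatOf (m : ℕ) (π : Set (Set ℤ)) : Set (Set ℤ) :=
  if h : ∃ ρ, HatProps m π ρ then h.choose else ∅

/-- Two pairs A,B of π are connected when some block C of ρ = π̂ meets both. -/
def connStep (π ρ : Set (Set ℤ)) (A B : Set ℤ) : Prop :=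
  A ∈ π ∧ B ∈ π ∧ ∃ C ∈ ρ, (A ∩ C).Nonempty ∧ (B ∩ C).Nonempty

/-- The cycle (connected component) of pairs of π through A. -/
def compOf (π ρ : Set (Set ℤ)) (A : Set ℤ) : Set (Set ℤ) :=
  {B | Relation.ReflTransGen (connStep π ρ) A B}

/-- The set of all cycles (connected components of pairs). -/
def CompsOf (π ρ : Set (Set ℤ)) : Set (Set (Set ℤ)) :=
  {K | ∃ A ∈ π, K = compOf π ρ A}

/-- A component is negative when its support is invariant under negation. -/
def NegComp (K : Set (Set ℤ)) : Prop := negSet (⋃₀ K) = ⋃₀ K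

/-- c₋(π): the number of negative cycles of π ∈ P₂^{sym}(2n). -/
def cNeg (n : ℕ) (π : Set (Set ℤ)) : ℕ :=
  {K ∈ CompsOf π (hatOf (2 * n) π) | NegComp K}.ncard

/-- c(π): the number of cycles of π ∈ P₂^{sym}(2n); positive cycles come in mirror
pairs, each mirror pair counted once. -/
def cCount (n : ℕ) (π : Set (Set ℤ)) : ℕ :=
  cNeg n π + {K ∈ CompsOf π (hatOf (2 * n) π) | ¬NegComp K}.ncard / 2



/-- The set {1,…,m} ⊆ ℤ. -/
def posInterval (m : ℕ) : Set ℤ := {i | 1 ≤ i ∧ i ≤ (m : ℤ)}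

/-- P₂(m): pair partitions (perfect matchings) of {1,…,m}. -/
def P2on (m : ℕ) (π : Set (Set ℤ)) : Prop :=
  IsPartitionOn (posInterval m) π ∧ ∀ B ∈ π, IsPairB B

/-- The set of left legs of a partition into pairs. -/
def leftLegs (π : Set (Set ℤ)) : Set ℤ :=
  {a | ∃ b : ℤ, a < b ∧ ({a, b} : Set ℤ) ∈ π}

/-- The defining properties of the unique noncrossing pair partition π̂ of {1,…,m} with
the same set of left legs as π. -/
def Hat2Props (m : ℕ) (π ρ : Set (Set ℤ)) : Prop :=
  P2on m ρ ∧ NonCrossing ρ ∧ leftLegs ρ = leftLegs π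

open Classical in
/-- The noncrossing pair partition π̂ of {1,…,m} with the same left legs as π. -/
def hat2Of (m : ℕ) (π : Set (Set ℤ)) : Set (Set ℤ) :=
  if h : ∃ ρ, Hat2Props m π ρ then h.choose else ∅

/-- c(π) for π ∈ P₂(m): the number of cycles (connected components) of the union of π
with π̂, viewed as a 2-regular multigraph (components counted through the pairs of π). -/
def c2Count (m : ℕ) (π : Set (Set ℤ)) : ℕ :=
  (CompsOf π (hat2Of m π)).ncard

/-!
Write a pair partition `σ` of `{1,…,2n}` as the pairs `{u x, v x}` with `u x < v x`. Then `σ̂`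
consists of the pairs `{u x, v (τ x)}` for a permutation `τ` of the index set, and the cycles of
`σ` are the cycles of `τ`.

The symmetric partitions lying over `σ` are obtained by a free choice of signs `ε x`: they
consist of the pairs `{ε x * u x, v x}` and their negatives. The hat of such a lift is the lift
of `σ̂` with all signs `1`, so the cycles of the lift are those of the double cover
`(x, s) ↦ (τ x, s * ε x)` of `τ`. Above a cycle of `τ` lies a single negative cycle if the product
of `ε` along it is `-1`, and a mirror pair of positive cycles if it is `1`.

Hence a lift has as many cycles as `σ`, and `c₋` counts the cycles of `τ` with sign product `-1`.
Each choice of sign products comes from `2 ^ (n - c)` choices of `ε`, and summing over sign products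
gives `(1 + q₋) ^ c`.
-/

open Equiv Function Set Equiv.Perm

section FiberProducts

variable {X Y G H M R : Type*}

open Classical in
/-- The product of a family over each fiber of `f`: the pushforward of `ε : X → M` along
`f : X → Y`, as a homomorphism. -/
def fiberProd [Fintype X] [CommMonoid M] (f : X → Y) : (X → M) →* (Y → M) where
  toFun ε y := ∏ x with f x = y, ε x
  map_one' := by ext; simp
  map_mul' ε δ := by ext; simp [Finset.prod_mul_distrib]

lemma fiberProd_surjective [Fintype X] [CommMonoid M] {f : X → Y} (hf : Surjective f) :
    Surjective (fiberProd f : (X → M) →* (Y → M)) := by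
  classical
  intro δ
  refine ⟨fun x => if x = surjInv hf (f x) then δ (f x) else 1, funext fun y => ?_⟩
  have hy : f (surjInv hf y) = y := surjInv_eq hf y
  refine (Finset.prod_eq_single_of_mem (surjInv hf y) (by simpa using hy) ?_).trans (by simp [hy])
  intro x hx hne
  obtain rfl : f x = y := by simpa using hx
  exact if_neg hne

lemma sum_comp_monoidHom [Group G] [Group H] [Fintype G] [Fintype H] [AddCommMonoid R]
    {φ : G →* H} (hφ : Surjective φ) (F : H → R) :
    ∑ g, F (φ g) = Nat.card φ.ker • ∑ h, F h := by
  classical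
  have card_fiber (h : H) : Finset.card {g | φ g = h} = Nat.card φ.ker := by
    rw [MonoidHom.card_fiber_eq_of_mem_range φ (hφ h) ⟨1, map_one φ⟩, Nat.card_eq_fintype_card,
      Fintype.card_subtype]
    exact congrArg Finset.card (by ext; simp [MonoidHom.mem_ker])
  rw [← Finset.sum_fiberwise _ φ, Finset.smul_sum]
  refine Finset.sum_congr rfl fun h _ => ?_
  rw [← card_fiber h, ← Finset.sum_const]
  exact Finset.sum_congr rfl fun g hg => by rw [(Finset.mem_filter.1 hg).2]

lemma card_ker_mul_card [Group G] [Group H] {φ : G →* H} (hφ : Surjective φ) :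
    Nat.card φ.ker * Nat.card H = Nat.card G := by
  rw [← φ.ker.card_mul_index, Subgroup.index_ker, MonoidHom.range_eq_top.2 hφ, Subgroup.card_top]

lemma sum_pow_ncard_neg_one [CommSemiring R] [Fintype Y] [DecidableEq Y] (q : R) :
    ∑ δ : Y → ℤˣ, q ^ {y | δ y = -1}.ncard = (1 + q) ^ Nat.card Y := by
  classical
  have pow_eq_prod (δ : Y → ℤˣ) :
      q ^ {y | δ y = -1}.ncard = ∏ y, if δ y = -1 then q else 1 := by
    rw [Finset.prod_ite, Finset.prod_const, Finset.prod_const_one, mul_one,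
      Set.ncard_eq_toFinset_card', Set.toFinset_ofPred]
  have sum_units : ∑ s : ℤˣ, (if s = -1 then q else 1) = 1 + q := by
    simp [UnitsInt.univ]
  have prod_sum := Finset.prod_univ_sum (fun _ : Y => (Finset.univ : Finset ℤˣ))
    fun _ s => if s = -1 then q else 1
  rw [Finset.prod_const, Fintype.piFinset_univ, sum_units, Finset.card_univ] at prod_sum
  simp_rw [pow_eq_prod, Nat.card_eq_fintype_card, prod_sum]

lemma sum_pow_ncard_fiberProd_eq_neg_one [CommSemiring R] [Fintype X] [DecidableEq X]
    [Finite Y] {f : X → Y} (hf : Surjective f) (q : R) :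
    ∑ ε : X → ℤˣ, q ^ {y | fiberProd f ε y = -1}.ncard
      = 2 ^ (Nat.card X - Nat.card Y) * (1 + q) ^ Nat.card Y := by
  classical
  have := Fintype.ofFinite Y
  have hφ := fiberProd_surjective (M := ℤˣ) hf
  have card_units : Nat.card ℤˣ = 2 := by rw [Nat.card_eq_fintype_card, Fintype.card_units_int]
  have card_ker : Nat.card (fiberProd f : (X → ℤˣ) →* (Y → ℤˣ)).ker
      = 2 ^ (Nat.card X - Nat.card Y) := by
    have card_mul := card_ker_mul_card hφ
    rw [Nat.card_fun, Nat.card_fun, card_units,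
      ← pow_sub_mul_pow 2 (Nat.card_le_card_of_surjective f hf)] at card_mul
    exact Nat.eq_of_mul_eq_mul_right (by positivity) card_mul
  rw [sum_comp_monoidHom hφ fun δ : Y → ℤˣ => q ^ {y | δ y = -1}.ncard, sum_pow_ncard_neg_one,
    card_ker, nsmul_eq_mul, Nat.cast_pow, Nat.cast_ofNat]

end FiberProducts

section SkewProducts

variable {X Y G : Type*}

lemma semiconj_zpow {T : Perm X} {S : Perm Y} {f : X → Y} (h : Semiconj f T S) (k : ℤ) :
    Semiconj f ⇑(T ^ k) ⇑(S ^ k) := by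
  induction k using Int.induction_on with
  | zero => exact fun x => rfl
  | succ k ih =>
    rw [zpow_add_one, zpow_add_one]
    exact ih.comp_right h
  | pred k ih =>
    rw [zpow_sub_one, zpow_sub_one]
    exact ih.comp_right fun x => by
      rw [eq_inv_iff_eq, ← h, ← Perm.mul_apply, mul_inv_cancel, Perm.one_apply]

lemma sameCycle_map {T : Perm X} {S : Perm Y} {f : X → Y} (h : Semiconj f T S) {x y : X}
    (hxy : T.SameCycle x y) : S.SameCycle (f x) (f y) := by
  obtain ⟨k, rfl⟩ := hxy
  exact ⟨k, (semiconj_zpow h k x).symm⟩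

/-- The orbits of a permutation, fixed points included. -/
abbrev Cycles (p : Perm X) : Type _ := Quotient (SameCycle.setoid p)

lemma cycles_mk_eq_mk {p : Perm X} {x y : X} :
    (Quotient.mk _ x : Cycles p) = Quotient.mk _ y ↔ p.SameCycle x y :=
  Quotient.eq

/-- The product of the values of `ε` along a cycle of `p`. -/
abbrev cycleProd [Fintype X] [CommMonoid G] (p : Perm X) (ε : X → G) : Cycles p → G :=
  fiberProd (Quotient.mk _) ε

/-- The skew product of `p` with the cocycle `ε`; for `G = ℤˣ` it is a double cover of `p`. -/
def skewProduct [Group G] (p : Perm X) (ε : X → G) : Perm (X × G) :=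
  p.prodShear fun x => Equiv.mulRight (ε x)

lemma semiconj_fst_skewProduct [Group G] (p : Perm X) (ε : X → G) :
    Semiconj Prod.fst (skewProduct p ε) p :=
  fun _ => rfl

lemma commute_mulLeft_skewProduct [Group G] (p : Perm X) (ε : X → G) (g : G) :
    Function.Commute (Prod.map id (g * ·)) (skewProduct p ε) :=
  fun z => Prod.ext rfl (mul_assoc g z.2 (ε z.1)).symm

variable [CommGroup G]

lemma skewProduct_pow_apply (p : Perm X) (ε : X → G) (k : ℕ) (x : X) (s : G) :
    (skewProduct p ε ^ k) (x, s) = ((p ^ k) x, s * ∏ i ∈ Finset.range k, ε ((p ^ i) x)) := by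
  induction k with
  | zero => simp
  | succ k ih =>
    rw [pow_succ', Perm.mul_apply, ih, Finset.prod_range_succ, pow_succ' p, Perm.mul_apply,
      ← mul_assoc]
    rfl

lemma prod_range_card_isCycleOn {p : Perm X} {C : Finset X} (hC : p.IsCycleOn C) {x : X}
    (hx : x ∈ C) (ε : X → G) :
    ∏ i ∈ Finset.range C.card, ε ((p ^ i) x) = ∏ y ∈ C, ε y := by
  refine Finset.prod_nbij (fun i => (p ^ i) x) ?_ ?_ ?_ fun _ _ => rfl
  · exact fun i _ => (hC.1.perm_pow i).mapsTo hx
  · intro i hi j hj hij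
    rw [Finset.mem_coe, Finset.mem_range] at hi hj
    exact ((hC.pow_apply_eq_pow_apply hx).1 hij).eq_of_lt_of_lt hi hj
  · intro y hy
    obtain ⟨i, hi, rfl⟩ := hC.exists_pow_eq hx hy
    exact ⟨i, by simpa using hi, rfl⟩

variable [Fintype X]

/-- Going once around the cycle multiplies the second coordinate by the cycle product, so the
cycles of the skew product above it are the cosets of the subgroup this product generates. -/
lemma sameCycle_skewProduct_iff (p : Perm X) (ε : X → G) (x : X) (s t : G) :
    (skewProduct p ε).SameCycle (x, s) (x, t)
      ↔ s⁻¹ * t ∈ Subgroup.zpowers (cycleProd p ε (Quotient.mk _ x)) := by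
  classical
  set σ := cycleProd p ε (Quotient.mk _ x)
  let C : Finset X := {y | (Quotient.mk _ y : Cycles p) = Quotient.mk _ x}
  have hx : x ∈ C := by simp [C]
  have mem_C {y : X} : y ∈ C ↔ p.SameCycle y x := by simp [C, cycles_mk_eq_mk]
  have hC : p.IsCycleOn C := by
    refine ⟨p.bijOn fun y => ?_, fun y hy z hz => ?_⟩
    · simp only [Finset.mem_coe, mem_C, sameCycle_apply_left]
    · exact (mem_C.1 hy).trans (mem_C.1 hz).symm
  have around : Semiconj (Prod.mk x) (Equiv.mulRight σ) ⇑(skewProduct p ε ^ C.card) := by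
    intro r
    rw [skewProduct_pow_apply, hC.pow_card_apply hx, prod_range_card_isCycleOn hC hx]
    exact Prod.ext rfl (congrArg (r * ·) (Finset.prod_congr (by ext; simp [C]) fun _ _ => rfl))
  have around_zpow (m : ℤ) : (skewProduct p ε ^ (C.card * m : ℤ)) (x, s) = (x, s * σ ^ m) := by
    rw [zpow_mul, zpow_natCast, ← semiconj_zpow around m s, Equiv.zpow_mulRight,
      Equiv.coe_mulRight]
  constructor
  · rintro ⟨k, hk⟩
    have hkx : (p ^ k) x = x := by
      rw [← semiconj_zpow (semiconj_fst_skewProduct p ε) k (x, s), hk]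
    obtain ⟨m, rfl⟩ := (hC.zpow_apply_eq hx).1 hkx
    rw [around_zpow, Prod.mk.injEq] at hk
    exact ⟨m, by simp [← hk.2]⟩
  · intro hst
    obtain ⟨m, hm⟩ := Subgroup.mem_zpowers_iff.1 hst
    exact ⟨C.card * m, by rw [around_zpow, hm, mul_inv_cancel_left]⟩

/-- The projection of the cycles of a skew product to the cycles of its base. -/
def cyclesProj (p : Perm X) (ε : X → G) : Cycles (skewProduct p ε) → Cycles p :=
  Quotient.map Prod.fst fun _ _ => sameCycle_map (semiconj_fst_skewProduct p ε)

lemma ncard_cyclesProj_fiber (p : Perm X) (ε : X → G) (K : Cycles p) :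
    (cyclesProj p ε ⁻¹' {K}).ncard = (Subgroup.zpowers (cycleProd p ε K)).index := by
  induction K using Quotient.inductionOn with | h x =>
  let c : G → Cycles (skewProduct p ε) := fun s => Quotient.mk _ (x, s)
  have fiber_eq : cyclesProj p ε ⁻¹' {Quotient.mk _ x} = range c := by
    ext Q
    induction Q using Quotient.inductionOn with | h z =>
    constructor
    · intro hz
      obtain ⟨k, hk⟩ := cycles_mk_eq_mk.1 hz
      have hkz := semiconj_zpow (semiconj_fst_skewProduct p ε) k z
      refine ⟨((skewProduct p ε ^ k) z).2, cycles_mk_eq_mk.2 (SameCycle.symm ⟨k, ?_⟩)⟩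
      exact Prod.ext (hkz.trans hk) rfl
    · rintro ⟨s, hs⟩
      exact cycles_mk_eq_mk.2 (sameCycle_map (semiconj_fst_skewProduct p ε)
        (cycles_mk_eq_mk.1 hs).symm)
  have ker_eq : Setoid.ker c = QuotientGroup.leftRel (Subgroup.zpowers (cycleProd p ε ⟦x⟧)) := by
    ext s t
    rw [Setoid.ker_def, cycles_mk_eq_mk, sameCycle_skewProduct_iff, QuotientGroup.leftRel_apply]
  rw [fiber_eq, ← Nat.card_coe_set_eq, ← Nat.card_congr (Setoid.quotientKerEquivRange c), ker_eq]
  rfl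

lemma ncard_preimage_eq_mul_ncard {α β : Type*} [Finite α] [Finite β] {f : α → β} {s : Set β}
    {c : ℕ} (h : ∀ b ∈ s, (f ⁻¹' {b}).ncard = c) : (f ⁻¹' s).ncard = c * s.ncard := by
  lift s to Finset β using s.toFinite
  have card_fiber : ∀ b ∈ s, Nat.card {a // f a = b} = c :=
    fun b hb => (Nat.card_coe_set_eq (f ⁻¹' {b})).trans (h b hb)
  rw [← Nat.card_coe_set_eq, Finset.card_preimage_eq_sum_card_image_eq fun b _ => toFinite _,
    Finset.sum_const_nat card_fiber, mul_comm, Set.ncard_coe_finset]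

lemma neg_one_mem_zpowers_iff {σ : ℤˣ} : -1 ∈ Subgroup.zpowers σ ↔ σ = -1 := by
  rcases Int.units_eq_one_or σ with rfl | rfl <;> simp

lemma index_zpowers_intUnits (σ : ℤˣ) :
    (Subgroup.zpowers σ).index = if σ = -1 then 1 else 2 := by
  rcases Int.units_eq_one_or σ with rfl | rfl
  · simp [Nat.card_eq_fintype_card]
  · rw [if_pos rfl, Subgroup.index_eq_one, eq_top_iff]
    intro s _
    rcases Int.units_eq_one_or s with rfl | rfl <;> simp

lemma sameCycle_skewProduct_neg_iff (p : Perm X) (ε : X → ℤˣ) (x : X) (s : ℤˣ) :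
    (skewProduct p ε).SameCycle (x, s) (x, -s) ↔ cycleProd p ε (Quotient.mk _ x) = -1 := by
  rw [sameCycle_skewProduct_iff, mul_neg, inv_mul_cancel, neg_one_mem_zpowers_iff]

lemma ncard_cyclesProj_preimage_eq_neg_one (p : Perm X) (ε : X → ℤˣ) :
    (cyclesProj p ε ⁻¹' {K | cycleProd p ε K = -1}).ncard
      = {K | cycleProd p ε K = -1}.ncard := by
  rw [ncard_preimage_eq_mul_ncard (c := 1), one_mul]
  exact fun K (hK : cycleProd p ε K = -1) => by
    rw [ncard_cyclesProj_fiber, index_zpowers_intUnits, if_pos hK]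

lemma ncard_cyclesProj_preimage_ne_neg_one (p : Perm X) (ε : X → ℤˣ) :
    (cyclesProj p ε ⁻¹' {K | cycleProd p ε K ≠ -1}).ncard
      = 2 * {K | cycleProd p ε K ≠ -1}.ncard := by
  refine ncard_preimage_eq_mul_ncard fun K (hK : cycleProd p ε K ≠ -1) => ?_
  rw [ncard_cyclesProj_fiber, index_zpowers_intUnits, if_neg hK]

end SkewProducts

section Pairs

variable {X Y : Type*} {u v : X → ℤ}

/-- The family of pairs `{u x, v x}` indexed by `x`. It is a pair partition, with every pair
listed once, when the labels `Sum.elim u v` are injective. -/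
def pairsOf (u v : X → ℤ) : Set (Set ℤ) := range fun x => {u x, v x}

lemma pairsOf_comp_equiv (e : Y ≃ X) (u v : X → ℤ) : pairsOf (u ∘ e) (v ∘ e) = pairsOf u v :=
  e.surjective.range_comp fun x => ({u x, v x} : Set ℤ)

lemma sumElim_mem_pair_iff (h : Injective (Sum.elim u v)) {z : X ⊕ X} {x : X} :
    Sum.elim u v z ∈ ({u x, v x} : Set ℤ) ↔ Sum.elim id id z = x := by
  rw [mem_insert_iff, mem_singleton_iff]
  change Sum.elim u v z = Sum.elim u v (.inl x) ∨ Sum.elim u v z = Sum.elim u v (.inr x) ↔ _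
  rw [h.eq_iff, h.eq_iff]
  cases z <;> simp

lemma pair_injective (h : Injective (Sum.elim u v)) :
    Injective fun x => ({u x, v x} : Set ℤ) :=
  fun x _ hxy => (sumElim_mem_pair_iff h (z := .inl x)).1 <| by
    change u x ∈ ({u _, v _} : Set ℤ)
    exact Eq.subset hxy (mem_insert _ _)

lemma isPartitionOn_pairsOf (h : Injective (Sum.elim u v)) :
    IsPartitionOn (range (Sum.elim u v)) (pairsOf u v) := by
  constructor
  · rintro _ ⟨x, rfl⟩
    exact ⟨pair_subset ⟨.inl x, rfl⟩ ⟨.inr x, rfl⟩, insert_nonempty _ _⟩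
  · rintro _ ⟨z, rfl⟩
    refine ⟨_, ⟨mem_range_self (Sum.elim id id z), (sumElim_mem_pair_iff h).2 rfl⟩, ?_⟩
    rintro _ ⟨⟨x, rfl⟩, hx⟩
    rw [(sumElim_mem_pair_iff h).1 hx]

lemma isPairB_of_mem_pairsOf (h : Injective (Sum.elim u v)) {B : Set ℤ} (hB : B ∈ pairsOf u v) :
    IsPairB B := by
  obtain ⟨x, rfl⟩ := hB
  exact ⟨u x, v x, h.ne Sum.inl_ne_inr, rfl⟩

end Pairs

section Components

variable {X : Type*} {u v : X → ℤ} {τ : Perm X}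

lemma pair_inter_pair_nonempty_iff (h : Injective (Sum.elim u v)) {x z : X} :
    (({u x, v x} : Set ℤ) ∩ {u z, v (τ z)}).Nonempty ↔ z = x ∨ τ z = x := by
  have pair_inter (a b : ℤ) (B : Set ℤ) : (({a, b} : Set ℤ) ∩ B).Nonempty ↔ a ∈ B ∨ b ∈ B := by
    simp [Set.Nonempty, or_and_right, exists_or]
  rw [inter_comm, pair_inter]
  exact or_congr (sumElim_mem_pair_iff h (z := .inl z)) (sumElim_mem_pair_iff h (z := .inr (τ z)))

lemma connStep_pairsOf_iff (h : Injective (Sum.elim u v)) {x y : X} :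
    connStep (pairsOf u v) (pairsOf u (v ∘ τ)) {u x, v x} {u y, v y}
      ↔ ∃ z, (z = x ∨ τ z = x) ∧ (z = y ∨ τ z = y) := by
  simp only [connStep, pairsOf, mem_range_self, true_and, exists_range_iff, comp_apply,
    pair_inter_pair_nonempty_iff h]

/-- The pairs `{u x, v x}` whose index lies on a given cycle of `τ`. -/
def pairsOn (u v : X → ℤ) (τ : Perm X) (Q : Cycles τ) : Set (Set ℤ) :=
  (fun x => {u x, v x}) '' (Quotient.mk _ ⁻¹' {Q})

lemma pairsOn_injective (h : Injective (Sum.elim u v)) : Injective (pairsOn u v τ) :=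
  (image_injective.2 (pair_injective h)).comp
    ((preimage_injective.2 Quotient.mk_surjective).comp singleton_injective)

lemma compOf_pairsOf (h : Injective (Sum.elim u v)) (x : X) :
    compOf (pairsOf u v) (pairsOf u (v ∘ τ)) {u x, v x} = pairsOn u v τ (Quotient.mk _ x) := by
  ext B
  constructor
  · intro hB
    induction hB with
    | refl => exact ⟨x, rfl, rfl⟩
    | tail _ step ih =>
      obtain ⟨y, hy, rfl⟩ := ih
      obtain ⟨y', rfl⟩ := step.2.1
      refine ⟨y', Eq.trans (cycles_mk_eq_mk.2 ?_) hy, rfl⟩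
      obtain ⟨z, rfl | rfl, rfl | rfl⟩ := (connStep_pairsOf_iff h).1 step <;>
        simp [SameCycle.refl]
  · rintro ⟨y, hy, rfl⟩
    obtain ⟨k, rfl⟩ := (cycles_mk_eq_mk.1 hy).symm
    clear hy
    induction k using Int.induction_on generalizing x with
    | zero => exact .refl
    | succ k ih =>
      rw [zpow_add_one]
      exact .head ((connStep_pairsOf_iff h).2 ⟨x, .inl rfl, .inr rfl⟩) (ih (τ x))
    | pred k ih =>
      rw [zpow_sub_one]
      exact .head ((connStep_pairsOf_iff h).2 ⟨τ⁻¹ x, .inr (by simp), .inl rfl⟩) (ih (τ⁻¹ x))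

lemma compsOf_pairsOf (h : Injective (Sum.elim u v)) :
    CompsOf (pairsOf u v) (pairsOf u (v ∘ τ)) = range (pairsOn u v τ) := by
  rw [← Quotient.mk_surjective.range_comp (pairsOn u v τ)]
  ext K
  simp only [CompsOf, pairsOf, mem_ofPred_eq, exists_range_iff]
  exact exists_congr fun x => by
    rw [comp_apply, ← compOf_pairsOf h]
    exact eq_comm

lemma ncard_compsOf_pairsOf (h : Injective (Sum.elim u v)) :
    (CompsOf (pairsOf u v) (pairsOf u (v ∘ τ))).ncard = Nat.card (Cycles τ) := by
  rw [compsOf_pairsOf h, ← Nat.card_coe_set_eq, Nat.card_range_of_injective (pairsOn_injective h)]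

lemma ncard_compsOf_pairsOf_sep (h : Injective (Sum.elim u v)) (P : Set (Set ℤ) → Prop) :
    {K ∈ CompsOf (pairsOf u v) (pairsOf u (v ∘ τ)) | P K}.ncard
      = {Q | P (pairsOn u v τ Q)}.ncard := by
  rw [compsOf_pairsOf h, ← ncard_image_of_injective _ (pairsOn_injective h)]
  congr 1
  ext K
  constructor
  · rintro ⟨⟨Q, rfl⟩, hQ⟩
    exact ⟨Q, hQ, rfl⟩
  · rintro ⟨Q, hQ, rfl⟩
    exact ⟨⟨Q, rfl⟩, hQ⟩

lemma sumElim_mem_sUnion_pairsOn_iff (h : Injective (Sum.elim u v)) {z : X ⊕ X} {Q : Cycles τ} :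
    Sum.elim u v z ∈ ⋃₀ pairsOn u v τ Q ↔ Quotient.mk _ (Sum.elim id id z) = Q := by
  simp only [pairsOn, sUnion_image, mem_iUnion₂, sumElim_mem_pair_iff h, exists_prop,
    exists_eq_right', mem_preimage, mem_singleton_iff]

lemma mem_negSet {B : Set ℤ} {a : ℤ} : a ∈ negSet B ↔ -a ∈ B := by
  simp [negSet]

lemma negSet_negSet (B : Set ℤ) : negSet (negSet B) = B := by
  ext a
  rw [mem_negSet, mem_negSet, neg_neg]

lemma negComp_pairsOn_iff (h : Injective (Sum.elim u v)) {ν : X → X} (hν : Function.Commute ν τ)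
    (hu : ∀ x, u (ν x) = -u x) (hv : ∀ x, v (ν x) = -v x) (y : X) :
    NegComp (pairsOn u v τ (Quotient.mk _ y)) ↔ τ.SameCycle y (ν y) := by
  constructor
  · intro hneg
    have hy : u y ∈ ⋃₀ pairsOn u v τ (Quotient.mk _ y) :=
      (sumElim_mem_sUnion_pairsOn_iff h (z := .inl y)).2 rfl
    rw [← hneg, mem_negSet, ← hu] at hy
    exact (cycles_mk_eq_mk.1 ((sumElim_mem_sUnion_pairsOn_iff h (z := .inl (ν y))).1 hy)).symm
  · intro hy
    have neg_subset : negSet (⋃₀ pairsOn u v τ (Quotient.mk _ y))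
        ⊆ ⋃₀ pairsOn u v τ (Quotient.mk _ y) := by
      rintro _ ⟨a, ⟨_, ⟨x, hx, rfl⟩, ha⟩, rfl⟩
      have hx' : τ.SameCycle (ν x) y :=
        (sameCycle_map hν.semiconj (cycles_mk_eq_mk.1 hx)).trans hy.symm
      rcases ha with rfl | rfl
      · simpa [hu] using
          (sumElim_mem_sUnion_pairsOn_iff h (z := .inl (ν x))).2 (cycles_mk_eq_mk.2 hx')
      · simpa [hv] using
          (sumElim_mem_sUnion_pairsOn_iff h (z := .inr (ν x))).2 (cycles_mk_eq_mk.2 hx')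
    refine neg_subset.antisymm ?_
    conv_lhs => rw [← negSet_negSet (⋃₀ _)]
    exact image_mono neg_subset

end Components

section Partitions

variable {S : Set ℤ} {π ρ : Set (Set ℤ)}

lemma IsPartitionOn.eq_of_mem (h : IsPartitionOn S ρ) {A B : Set ℤ} (hA : A ∈ ρ) (hB : B ∈ ρ)
    {a : ℤ} (haA : a ∈ A) (haB : a ∈ B) : A = B :=
  (h.2 a ((h.1 A hA).1 haA)).unique ⟨hA, haA⟩ ⟨hB, haB⟩

lemma IsPartitionOn.eq_of_subset (hπ : IsPartitionOn S π) (hρ : IsPartitionOn S ρ)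
    (hsub : π ⊆ ρ) : π = ρ := by
  refine hsub.antisymm fun B hB => ?_
  obtain ⟨a, ha⟩ := (hρ.1 B hB).2
  obtain ⟨A, ⟨hA, haA⟩, -⟩ := hπ.2 a ((hρ.1 B hB).1 ha)
  rwa [hρ.eq_of_mem hB (hsub hA) ha haA]

lemma pair_eq_pair_iff_of_lt {α : Type*} [Preorder α] {a b c d : α} (hab : a < b) (hcd : c < d) :
    ({a, b} : Set α) = {c, d} ↔ a = c ∧ b = d := by
  rw [Set.pair_eq_pair_iff, or_iff_left]
  rintro ⟨rfl, rfl⟩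
  exact hab.not_gt hcd

lemma IsPartitionOn.legs_eq (h : IsPartitionOn S ρ) {a b c d x : ℤ} (hab : a < b) (hcd : c < d)
    (habρ : {a, b} ∈ ρ) (hcdρ : {c, d} ∈ ρ) (hx : x ∈ ({a, b} : Set ℤ))
    (hx' : x ∈ ({c, d} : Set ℤ)) : a = c ∧ b = d :=
  (pair_eq_pair_iff_of_lt hab hcd).1 (h.eq_of_mem habρ hcdρ hx hx')

lemma IsPairB.exists_lt {B : Set ℤ} (hB : IsPairB B) : ∃ a b : ℤ, a < b ∧ B = {a, b} := by
  obtain ⟨a, b, hab, rfl⟩ := hB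
  rcases hab.lt_or_gt with hlt | hlt
  · exact ⟨a, b, hlt, rfl⟩
  · exact ⟨b, a, hlt, pair_comm a b⟩

lemma IsPairB.eq_pair {B : Set ℤ} (hB : IsPairB B) {a b : ℤ} (ha : a ∈ B) (hb : b ∈ B)
    (hab : a ≠ b) : B = {a, b} := by
  obtain ⟨c, d, -, rfl⟩ := hB
  rcases ha with rfl | rfl <;> rcases hb with rfl | rfl
  · exact absurd rfl hab
  · rfl
  · exact pair_comm _ _
  · exact absurd rfl hab

end Partitions

section Matchings

variable {X : Type*} {S : Set ℤ} {u v : X → ℤ}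

/-- The pairs `{u x, v x}`, listed once each and with left leg `u x`, form a pair partition
of `S`. -/
structure IsMatchingOn (S : Set ℤ) (u v : X → ℤ) : Prop where
  injective : Injective (Sum.elim u v)
  range_eq : range (Sum.elim u v) = S
  lt : ∀ x, u x < v x

lemma IsMatchingOn.isPartitionOn (h : IsMatchingOn S u v) : IsPartitionOn S (pairsOf u v) :=
  h.range_eq ▸ isPartitionOn_pairsOf h.injective

lemma IsMatchingOn.finite (h : IsMatchingOn S u v) (hS : S.Finite) : Finite X := by
  have := finite_range_iff h.injective |>.1 (h.range_eq ▸ hS)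
  exact Finite.sum_left X

lemma IsMatchingOn.comp_perm (h : IsMatchingOn S u v) {τ : Perm X} (hτ : ∀ x, u x < v (τ x)) :
    IsMatchingOn S u (v ∘ τ) := by
  have elim_eq : Sum.elim u (v ∘ τ) = Sum.elim u v ∘ Equiv.sumCongr (Equiv.refl X) τ := by
    ext (x | x) <;> rfl
  exact ⟨elim_eq ▸ h.injective.comp (Equiv.injective _),
    by rw [elim_eq, (Equiv.surjective _).range_comp, h.range_eq], hτ⟩

lemma leftLegs_pairsOf (h : ∀ x, u x < v x) : leftLegs (pairsOf u v) = range u := by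
  ext a
  constructor
  · rintro ⟨b, hab, x, hx⟩
    exact ⟨x, ((pair_eq_pair_iff_of_lt (h x) hab).1 hx).1⟩
  · rintro ⟨x, rfl⟩
    exact ⟨v x, h x, x, rfl⟩

lemma exists_isMatchingOn {σ : Set (Set ℤ)} (hσ : IsPartitionOn S σ)
    (hpair : ∀ B ∈ σ, IsPairB B) :
    ∃ v : leftLegs σ → ℤ, IsMatchingOn S (↑) v ∧ pairsOf (↑) v = σ := by
  choose v hlt hmem using fun a : leftLegs σ => a.2
  let u : leftLegs σ → ℤ := (↑)
  have injective : Injective (Sum.elim u v) := by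
    refine Sum.elim_injective.2 ⟨Subtype.val_injective, fun a b hab => ?_, fun a b hab => ?_⟩
    · exact Subtype.ext (hσ.legs_eq (x := v a) (hlt a) (hlt b) (hmem a) (hmem b) (by simp)
        (by simp [hab])).1
    · have := (hσ.legs_eq (hlt a) (hlt b) (hmem a) (hmem b) (mem_insert _ _) (.inr hab)).1
      exact (hlt b).ne (this ▸ hab)
  have pairs_subset : pairsOf u v ⊆ σ := range_subset_iff.2 hmem
  have range_eq : range (Sum.elim u v) = S := by
    ext x
    constructor
    · rintro ⟨a | a, rfl⟩
      · exact (hσ.1 _ (hmem a)).1 (mem_insert _ _)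
      · exact (hσ.1 _ (hmem a)).1 (.inr rfl)
    · intro hx
      obtain ⟨B, ⟨hB, hxB⟩, -⟩ := hσ.2 x hx
      obtain ⟨a, b, hab, rfl⟩ := (hpair B hB).exists_lt
      have ha : a ∈ leftLegs σ := ⟨b, hab, hB⟩
      rcases hxB with rfl | rfl
      · exact ⟨.inl ⟨_, ha⟩, rfl⟩
      · exact ⟨.inr ⟨a, ha⟩,
          (hσ.legs_eq (hlt ⟨a, ha⟩) hab (hmem ⟨a, ha⟩) hB (mem_insert _ _) (mem_insert _ _)).2⟩
  have hv : IsMatchingOn S u v := ⟨injective, range_eq, hlt⟩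
  exact ⟨v, hv, hv.isPartitionOn.eq_of_subset hσ pairs_subset⟩

end Matchings

section NoncrossingMatchings

variable {X α : Type*}

/-- The intervals from `u x` to `w x` are nondegenerate and any two of them are nested or
disjoint. -/
structure IsNoncrossingLegs [Preorder α] (u w : X → α) : Prop where
  lt : ∀ x, u x < w x
  le_of_lt : ∀ ⦃x y⦄, u x < u y → u y < w x → w y ≤ w x

/-- Uncrossing two intervals decreases `∑ x, u x * v (τ x)`, so a matching minimizing this sum
is noncrossing. -/
lemma exists_isNoncrossingLegs [Finite X] [CommRing α] [LinearOrder α] [IsStrictOrderedRing α]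
    {u v : X → α} (h : ∀ x, u x < v x) : ∃ τ : Perm X, IsNoncrossingLegs u (v ∘ τ) := by
  classical
  have := Fintype.ofFinite X
  obtain ⟨τ, hτ, hmin⟩ := Finset.exists_min_image {τ : Perm X | ∀ x, u x < v (τ x)}.toFinset
    (fun τ => ∑ x, u x * v (τ x)) ⟨1, by simpa using h⟩
  simp only [mem_toFinset, mem_ofPred_eq] at hτ hmin
  refine ⟨τ, hτ, fun x y hxy hyx => not_lt.1 fun hlt => ?_⟩
  rw [comp_apply] at hyx
  simp only [comp_apply] at hlt
  have hne : x ≠ y := ne_of_apply_ne u hxy.ne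
  have swap_lt (z : X) : u z < v ((τ * swap x y) z) := by
    rw [Perm.mul_apply]
    rcases eq_or_ne z x with rfl | hzx
    · simpa using hxy.trans (hyx.trans hlt)
    rcases eq_or_ne z y with rfl | hzy
    · simpa using hyx
    · rw [swap_apply_of_ne_of_ne hzx hzy]
      exact hτ z
  have sum_lt : ∑ z, (u z * v ((τ * swap x y) z) - u z * v (τ z)) < 0 := by
    rw [Fintype.sum_eq_add x y hne fun z hz => by
      rw [Perm.mul_apply, swap_apply_of_ne_of_ne hz.1 hz.2, sub_self]]
    simp only [Perm.mul_apply, swap_apply_left, swap_apply_right]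
    linear_combination mul_add_mul_lt_mul_add_mul hxy hlt
  rw [Finset.sum_sub_distrib, sub_neg] at sum_lt
  exact sum_lt.not_ge (hmin _ swap_lt)

lemma IsNoncrossingLegs.unique [Finite X] [LinearOrder α] {u v : X → α} (hu : Injective u)
    (hv : Injective v) {σ τ : Perm X} (hσ : IsNoncrossingLegs u (v ∘ σ))
    (hτ : IsNoncrossingLegs u (v ∘ τ)) : σ = τ := by
  have not_lt_of_max {σ τ : Perm X} (hσ : IsNoncrossingLegs u (v ∘ σ))
      (hτ : IsNoncrossingLegs u (v ∘ τ)) {a : X} (hmax : ∀ d, σ d ≠ τ d → u d ≤ u a) :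
      ¬v (σ a) < v (τ a) := by
    intro hlt
    obtain ⟨d, hd⟩ := τ.surjective (σ a)
    have hda : d ≠ a := by
      rintro rfl
      exact hlt.ne (congrArg v hd.symm)
    have hua : u d < u a :=
      (hmax d fun h => hda (σ.injective (h.trans hd))).lt_of_ne (hu.ne hda)
    have := hτ.le_of_lt hua (by simpa [hd] using hσ.lt a)
    exact hlt.not_ge (by simpa [hd] using this)
  by_contra hne
  obtain ⟨b, hb⟩ := DFunLike.ne_iff.1 hne
  obtain ⟨a, ha, hmax⟩ := exists_max_image {d | σ d ≠ τ d} u (toFinite _) ⟨b, hb⟩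
  rcases (hv.ne ha).lt_or_gt with hlt | hlt
  · exact not_lt_of_max hσ hτ hmax hlt
  · exact not_lt_of_max hτ hσ (fun d hd => hmax d hd.symm) hlt

variable {S : Set ℤ} {u v : X → ℤ}

lemma IsNoncrossingLegs.nonCrossing {w : X → ℤ} (h : IsNoncrossingLegs u w) :
    NonCrossing (pairsOf u w) := by
  rintro ⟨i, j, k, l, _, _, ⟨x, rfl⟩, ⟨y, rfl⟩, -, hij, hjk, hkl, hi, hk, hj, hl⟩
  have hx := h.lt x
  have hy := h.lt y
  have hxy := @h.le_of_lt x y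
  simp only [mem_insert_iff, mem_singleton_iff] at hi hj hk hl
  omega

lemma pairsOf_comp_subset [Finite X] (h : Injective (Sum.elim u v)) {τ : Perm X}
    (hτ : IsNoncrossingLegs u (v ∘ τ)) {ρ : Set (Set ℤ)} (hρ : IsPartitionOn S ρ)
    (hnc : NonCrossing ρ) (hex : ∀ x, ∃ y, u y < v x ∧ {u y, v x} ∈ ρ) :
    pairsOf u (v ∘ τ) ⊆ ρ := by
  obtain ⟨hu, hv, -⟩ := Sum.elim_injective.1 h
  choose k hlt hmem using hex
  have hk : Injective k := fun x y hxy =>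
    hv (hρ.legs_eq (x := u (k x)) (hlt x) (hlt y) (hmem x) (hmem y) (by simp) (by simp [hxy])).2
  let σ : Perm X := (Equiv.ofBijective k (Finite.injective_iff_bijective.1 hk)).symm
  have k_σ (x : X) : k (σ x) = x := Equiv.ofBijective_apply_symm_apply k _ x
  have hltσ (x : X) : u x < v (σ x) := by simpa only [k_σ] using hlt (σ x)
  have hmemσ (x : X) : {u x, v (σ x)} ∈ ρ := by simpa only [k_σ] using hmem (σ x)
  have hσ : IsNoncrossingLegs u (v ∘ σ) := by
    refine ⟨hltσ, fun x y hxy hyx => not_lt.1 fun hcross => hnc ?_⟩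
    refine ⟨u x, u y, v (σ x), v (σ y), _, _, hmemσ x, hmemσ y, fun heq => ?_, hxy, hyx, hcross,
      by simp⟩
    exact hxy.ne ((pair_eq_pair_iff_of_lt (hltσ x) (hltσ y)).1 heq).1
  rw [← hσ.unique hu hv hτ]
  exact range_subset_iff.2 hmemσ

lemma hat2Of_pairsOf [Finite X] {m : ℕ} (h : IsMatchingOn (posInterval m) u v) {τ : Perm X}
    (hτ : IsNoncrossingLegs u (v ∘ τ)) : hat2Of m (pairsOf u v) = pairsOf u (v ∘ τ) := by
  have hw := h.comp_perm hτ.lt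
  have hex : ∃ ρ, Hat2Props m (pairsOf u v) ρ :=
    ⟨_, ⟨hw.isPartitionOn, fun _ => isPairB_of_mem_pairsOf hw.injective⟩, hτ.nonCrossing,
      by rw [leftLegs_pairsOf h.lt, leftLegs_pairsOf hτ.lt]⟩
  rw [hat2Of, dif_pos hex]
  obtain ⟨⟨hpart, hpair⟩, hnc, hlegs⟩ := hex.choose_spec
  rw [leftLegs_pairsOf h.lt] at hlegs
  refine (hw.isPartitionOn.eq_of_subset hpart
    (pairsOf_comp_subset h.injective hτ hpart hnc fun x => ?_)).symm
  obtain ⟨B, ⟨hB, hxB⟩, -⟩ := hpart.2 (v x) (h.range_eq ▸ ⟨.inr x, rfl⟩)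
  obtain ⟨a, b, hab, rfl⟩ := (hpair B hB).exists_lt
  obtain ⟨y, rfl⟩ : a ∈ range u := hlegs ▸ ⟨b, hab, hB⟩
  rcases hxB with hx | rfl
  · exact absurd hx.symm (h.injective.ne Sum.inl_ne_inr)
  · exact ⟨y, hab, hB⟩

lemma c2Count_pairsOf [Finite X] {m : ℕ} (h : IsMatchingOn (posInterval m) u v) {τ : Perm X}
    (hτ : IsNoncrossingLegs u (v ∘ τ)) : c2Count m (pairsOf u v) = Nat.card (Cycles τ) := by
  rw [c2Count, hat2Of_pairsOf h hτ, ncard_compsOf_pairsOf h.injective]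

end NoncrossingMatchings

section SignedLabels

variable {Y : Type*} {w : Y → ℤ}

/-- The extension of a labelling by positive integers to a labelling by integers of either sign. -/
def signed (w : Y → ℤ) (z : Y × ℤˣ) : ℤ := z.2 * w z.1

lemma signed_one (w : Y → ℤ) (y : Y) : signed w (y, 1) = w y := by simp [signed]

lemma signed_neg (w : Y → ℤ) (y : Y) (s : ℤˣ) : signed w (y, -s) = -signed w (y, s) := by
  simp [signed]

lemma abs_signed (hw : ∀ y, 0 < w y) (z : Y × ℤˣ) : |signed w z| = w z.1 := by
  rw [signed, abs_mul, Int.isUnit_iff_abs_eq.1 z.2.isUnit, one_mul, abs_of_pos (hw z.1)]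

lemma exists_signed_eq {a : ℤ} {y : Y} (h : |a| = w y) : ∃ s : ℤˣ, signed w (y, s) = a := by
  rcases abs_choice a with ha | ha
  · exact ⟨1, by rw [signed_one, ← h, ha]⟩
  · exact ⟨-1, by rw [signed_neg, signed_one, ← h, ha, neg_neg]⟩

lemma signed_injective (hw : ∀ y, 0 < w y) (hinj : Injective w) : Injective (signed w) := by
  rintro ⟨y, s⟩ ⟨y', t⟩ h
  obtain rfl : y = y' := hinj (by simpa [abs_signed hw] using congrArg abs h)
  exact Prod.ext rfl (Units.ext (mul_right_cancel₀ (hw y).ne' h))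

lemma range_signed (hw : ∀ y, 0 < w y) : range (signed w) = abs ⁻¹' range w := by
  ext a
  constructor
  · rintro ⟨z, rfl⟩
    exact ⟨z.1, (abs_signed hw z).symm⟩
  · rintro ⟨y, hy⟩
    obtain ⟨s, hs⟩ := exists_signed_eq hy.symm
    exact ⟨(y, s), hs⟩

lemma pmSet_eq_preimage_abs (m : ℕ) : pmSet m = abs ⁻¹' posInterval m := by
  ext a
  simp only [pmSet, posInterval, mem_ofPred_eq, mem_preimage, ← abs_pos (a := a)]
  exact Iff.rfl

end SignedLabels

section SymmetricLifts

variable {X : Type*} {m n : ℕ} {u v w : X → ℤ} {τ : Perm X} {ε : X → ℤˣ}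

/-- The symmetric pair partition consisting of the pairs `{ε x * u x, v x}` and their negatives. -/
def symLift (ε : X → ℤˣ) (u v : X → ℤ) : Set (Set ℤ) :=
  pairsOf (signed u ∘ skewProduct 1 ε) (signed v)

lemma symLift_one (u v : X → ℤ) : symLift 1 u v = pairsOf (signed u) (signed v) := by
  rw [symLift]
  congr 1
  ext z
  simp [skewProduct]

lemma negSet_pair (a b : ℤ) : negSet {a, b} = {-a, -b} :=
  image_pair _ a b

lemma negSet_symLift_pair (x : X) (s : ℤˣ) :
    negSet {(signed u ∘ skewProduct 1 ε) (x, s), signed v (x, s)}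
      = {(signed u ∘ skewProduct 1 ε) (x, -s), signed v (x, -s)} := by
  rw [negSet_pair, ← signed_neg]
  congr 1
  simp [skewProduct, signed]

lemma negSet_mem_symLift {B : Set ℤ} (hB : B ∈ symLift ε u v) : negSet B ∈ symLift ε u v := by
  obtain ⟨⟨x, s⟩, rfl⟩ := hB
  exact ⟨(x, -s), (negSet_symLift_pair x s).symm⟩

lemma pair_mem_symLift (x : X) : {signed u (x, ε x), v x} ∈ symLift ε u v :=
  ⟨(x, 1), by simp [skewProduct, signed_one]⟩

lemma symLift_subset {ρ : Set (Set ℤ)} (hρ : ∀ B ∈ ρ, negSet B ∈ ρ)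
    (h : ∀ x, {signed u (x, ε x), v x} ∈ ρ) : symLift ε u v ⊆ ρ := by
  have base (x : X) : {(signed u ∘ skewProduct 1 ε) (x, 1), signed v (x, 1)} ∈ ρ := by
    rw [signed_one]
    simpa [skewProduct] using h x
  rintro _ ⟨⟨x, s⟩, rfl⟩
  rcases Int.units_eq_one_or s with rfl | rfl
  · exact base x
  · have := hρ _ (base x)
    rwa [negSet_symLift_pair] at this

lemma IsMatchingOn.pos (h : IsMatchingOn (posInterval m) u v) (z : X ⊕ X) :
    0 < Sum.elim u v z :=
  (h.range_eq.subset (mem_range_self z)).1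

lemma IsMatchingOn.left_pos (h : IsMatchingOn (posInterval m) u v) (x : X) : 0 < u x :=
  h.pos (.inl x)

lemma IsMatchingOn.right_pos (h : IsMatchingOn (posInterval m) u v) (x : X) : 0 < v x :=
  h.pos (.inr x)

lemma sumElim_signed (ε : X → ℤˣ) (u v : X → ℤ) :
    Sum.elim (signed u ∘ skewProduct 1 ε) (signed v) = signed (Sum.elim u v) ∘
      ((Equiv.sumCongr (skewProduct 1 ε) (Equiv.refl _)).trans (sumProdDistrib X X ℤˣ).symm) := by
  ext (z | z) <;> rfl

lemma IsMatchingOn.sumElim_signed_injective (h : IsMatchingOn (posInterval m) u v) :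
    Injective (Sum.elim (signed u ∘ skewProduct 1 ε) (signed v)) := by
  rw [sumElim_signed]
  exact (signed_injective h.pos h.injective).comp (Equiv.injective _)

lemma IsMatchingOn.isPartitionOn_symLift (h : IsMatchingOn (posInterval m) u v) :
    IsPartitionOn (pmSet m) (symLift ε u v) := by
  have range_eq : range (Sum.elim (signed u ∘ skewProduct 1 ε) (signed v)) = pmSet m := by
    rw [sumElim_signed, (Equiv.surjective _).range_comp, range_signed h.pos, h.range_eq,
      pmSet_eq_preimage_abs]
  exact range_eq ▸ isPartitionOn_pairsOf h.sumElim_signed_injective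

lemma IsMatchingOn.negSet_ne (h : IsMatchingOn (posInterval m) u v) {B : Set ℤ}
    (hB : B ∈ symLift ε u v) : negSet B ≠ B := by
  obtain ⟨⟨x, s⟩, rfl⟩ := hB
  intro heq
  have := pair_injective h.sumElim_signed_injective ((negSet_symLift_pair x s).symm.trans heq)
  exact units_ne_neg_self s (congrArg Prod.snd this).symm

lemma IsMatchingOn.isPairB_of_mem_symLift (h : IsMatchingOn (posInterval m) u v) {B : Set ℤ}
    (hB : B ∈ symLift ε u v) : IsPairB B :=
  isPairB_of_mem_pairsOf h.sumElim_signed_injective hB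

lemma IsMatchingOn.p2sym_symLift (h : IsMatchingOn (posInterval (2 * n)) u v) (ε : X → ℤˣ) :
    P2sym n (symLift ε u v) :=
  ⟨h.isPartitionOn_symLift, fun _ => h.isPairB_of_mem_symLift, fun _ => negSet_mem_symLift,
    fun _ => h.negSet_ne⟩

lemma IsMatchingOn.signed_ne (h : IsMatchingOn (posInterval m) u v) (x : X) (s : ℤˣ) :
    signed u (x, s) ≠ v x := by
  intro heq
  have habs := abs_signed h.left_pos (x, s)
  exact (h.lt x).ne' (by rwa [heq, abs_of_pos (h.right_pos x)] at habs)

lemma posRightLegs_eq (π : Set (Set ℤ)) : posRightLegs π = {b | ∃ a, |a| < b ∧ {a, b} ∈ π} := by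
  ext b
  refine exists_congr fun a => ?_
  rw [abs_lt, neg_lt]
  tauto

lemma IsMatchingOn.posRightLegs_symLift (h : IsMatchingOn (posInterval m) u v) :
    posRightLegs (symLift ε u v) = range v := by
  rw [posRightLegs_eq]
  ext b
  have hu : ∀ z, |signed u z| = u z.1 := abs_signed h.left_pos
  have hv : ∀ z, |signed v z| = v z.1 := abs_signed h.right_pos
  constructor
  · rintro ⟨a, hab, z, hz⟩
    have hb := (abs_nonneg a).trans_lt hab
    rcases Set.pair_eq_pair_iff.1 hz with ⟨-, rfl⟩ | ⟨rfl, rfl⟩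
    · exact ⟨z.1, by rw [← abs_of_pos hb, hv]⟩
    · rw [← abs_of_pos hb, comp_apply, hu, hv] at hab
      exact absurd hab (h.lt z.1).not_gt
  · rintro ⟨x, rfl⟩
    refine ⟨(signed u ∘ skewProduct 1 ε) (x, 1), ?_, (x, 1), ?_⟩
    · rw [comp_apply, hu]
      exact h.lt x
    · simp only [signed_one]

lemma negLeftLegs_eq_negSet {π : Set (Set ℤ)} (hsymm : ∀ B ∈ π, negSet B ∈ π)
    (hne : ∀ B ∈ π, negSet B ≠ B) : negLeftLegs π = negSet (posRightLegs π) := by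
  ext a
  rw [mem_negSet]
  constructor
  · rintro ⟨b, hab, hmem, hle⟩
    have hba : -a ≠ b := by
      rintro rfl
      exact hne _ hmem (by rw [negSet_pair, neg_neg, pair_comm])
    refine ⟨-b, neg_lt_neg hab, ?_, by omega⟩
    have := hsymm _ hmem
    rwa [negSet_pair, pair_comm] at this
  · rintro ⟨b, hba, hmem, hlt⟩
    refine ⟨-b, by omega, ?_, by omega⟩
    have := hsymm _ hmem
    rwa [negSet_pair, neg_neg, pair_comm] at this

lemma IsNoncrossingLegs.nonCrossing_symLift_one (h : IsNoncrossingLegs u w) (hu : ∀ x, 0 < u x) :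
    NonCrossing (symLift 1 u w) := by
  rw [symLift_one]
  rintro ⟨i, j, k, l, _, _, ⟨⟨x, s⟩, rfl⟩, ⟨⟨y, t⟩, rfl⟩, -, hij, hjk, hkl, hi, hk, hj, hl⟩
  have hux := hu x
  have huy := hu y
  have hx := h.lt x
  have hy := h.lt y
  have hxy := @h.le_of_lt x y
  have hyx := @h.le_of_lt y x
  simp only [signed, mem_insert_iff, mem_singleton_iff] at hi hj hk hl
  rcases Int.units_eq_one_or s with rfl | rfl <;> rcases Int.units_eq_one_or t with rfl | rfl <;>
    simp only [Units.val_neg, Units.val_one, neg_mul, one_mul] at hi hj hk hl <;>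
    omega

lemma pos_or_neg_of_mem_symLift_one (hu : ∀ x, 0 < u x) (hw : ∀ x, 0 < w x) {B : Set ℤ}
    (hB : B ∈ symLift 1 u w) : (∀ a ∈ B, 0 < a) ∨ ∀ a ∈ B, a < 0 := by
  rw [symLift_one] at hB
  obtain ⟨⟨x, s⟩, rfl⟩ := hB
  rcases Int.units_eq_one_or s with rfl | rfl
  · exact .inl (by simp [signed, hu, hw])
  · exact .inr (by simp [signed, hu, hw])

lemma IsMatchingOn.hatProps_symLift (h : IsMatchingOn (posInterval m) u v)
    (hτ : IsNoncrossingLegs u (v ∘ τ)) (ε : X → ℤˣ) :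
    HatProps m (symLift ε u v) (symLift 1 u (v ∘ τ)) := by
  have hw := h.comp_perm hτ.lt
  have rightLegs_eq : posRightLegs (symLift 1 u (v ∘ τ)) = posRightLegs (symLift ε u v) := by
    rw [hw.posRightLegs_symLift, h.posRightLegs_symLift, τ.surjective.range_comp]
  refine ⟨hw.isPartitionOn_symLift, fun _ hB => .inl (hw.isPairB_of_mem_symLift hB),
    hτ.nonCrossing_symLift_one h.left_pos, fun _ => negSet_mem_symLift,
    fun _ => pos_or_neg_of_mem_symLift_one h.left_pos hw.right_pos, rightLegs_eq, ?_, ?_⟩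
  · rw [negLeftLegs_eq_negSet (fun _ => negSet_mem_symLift) fun _ => hw.negSet_ne,
      negLeftLegs_eq_negSet (fun _ => negSet_mem_symLift) fun _ => h.negSet_ne, rightLegs_eq]
  · rintro ⟨a, b, c, -, -, -, hc⟩
    obtain ⟨p, q, hpq, heq⟩ := hw.isPairB_of_mem_symLift hc
    have hp : p ∈ ({c} : Set ℤ) := heq ▸ mem_insert _ _
    have hq : q ∈ ({c} : Set ℤ) := heq ▸ .inr rfl
    exact hpq (hp.trans hq.symm)

lemma IsMatchingOn.exists_leg_of_hatProps (h : IsMatchingOn (posInterval m) u v)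
    {ρ : Set (Set ℤ)} (hρ : HatProps m (symLift ε u v) ρ) (x : X) :
    ∃ y, u y < v x ∧ {u y, v x} ∈ ρ := by
  obtain ⟨hpart, -, -, -, hside, hlegs, -, -⟩ := hρ
  rw [h.posRightLegs_symLift] at hlegs
  obtain ⟨a, hav, hmem, -⟩ : v x ∈ posRightLegs ρ := hlegs ▸ mem_range_self x
  have ha_pos : 0 < a := by
    rcases hside _ hmem with hpos | hneg
    · exact hpos a (mem_insert _ _)
    · exact absurd (hneg (v x) (.inr rfl)) (h.right_pos x).not_gt
  have ha : a ∈ range (Sum.elim u v) := by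
    rw [h.range_eq, ← abs_of_pos ha_pos, ← mem_preimage, ← pmSet_eq_preimage_abs]
    exact (hpart.1 _ hmem).1 (mem_insert _ _)
  rcases ha with ⟨y | y, rfl⟩
  · exact ⟨y, hav, hmem⟩
  · obtain ⟨b, hbv, hb, -⟩ : v y ∈ posRightLegs ρ := hlegs ▸ mem_range_self y
    exact absurd (hpart.legs_eq hav hbv hmem hb (mem_insert _ _) (.inr rfl)).2 hav.ne'

lemma IsMatchingOn.hatOf_symLift [Finite X] (h : IsMatchingOn (posInterval m) u v)
    (hτ : IsNoncrossingLegs u (v ∘ τ)) (ε : X → ℤˣ) :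
    hatOf m (symLift ε u v) = symLift 1 u (v ∘ τ) := by
  have hex : ∃ ρ, HatProps m (symLift ε u v) ρ := ⟨_, h.hatProps_symLift hτ ε⟩
  rw [hatOf, dif_pos hex]
  have hρ := hex.choose_spec
  have hsub := pairsOf_comp_subset h.injective hτ hρ.1 hρ.2.2.1 (h.exists_leg_of_hatProps hρ)
  refine ((h.comp_perm hτ.lt).isPartitionOn_symLift.eq_of_subset hρ.1
    (symLift_subset hρ.2.2.2.1 fun x => hsub ⟨x, ?_⟩)).symm
  rw [Pi.one_apply, signed_one]

lemma symLift_one_comp_perm (ε : X → ℤˣ) (u v : X → ℤ) (τ : Perm X) :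
    symLift 1 u (v ∘ τ)
      = pairsOf (signed u ∘ skewProduct 1 ε) (signed v ∘ skewProduct τ ε) := by
  rw [symLift_one, ← pairsOf_comp_equiv (skewProduct 1 ε)]
  rfl

lemma IsMatchingOn.compsOf_symLift_sep_ncard [Fintype X] (h : IsMatchingOn (posInterval m) u v)
    (hτ : IsNoncrossingLegs u (v ∘ τ)) (ε : X → ℤˣ) (P : Prop → Prop) :
    {K ∈ CompsOf (symLift ε u v) (hatOf m (symLift ε u v)) | P (NegComp K)}.ncard
      = (cyclesProj τ ε ⁻¹' {K | P (cycleProd τ ε K = -1)}).ncard := by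
  rw [h.hatOf_symLift hτ, symLift_one_comp_perm ε, symLift,
    ncard_compsOf_pairsOf_sep h.sumElim_signed_injective fun K => P (NegComp K)]
  congr 1
  ext Q
  induction Q using Quotient.inductionOn with | h z =>
  obtain ⟨x, s⟩ := z
  have negComp_iff := negComp_pairsOn_iff (h.sumElim_signed_injective (ε := ε))
    (commute_mulLeft_skewProduct τ ε (-1)) (fun z => ?_) (fun z => ?_) (x, s)
  · rw [Prod.map_apply, neg_one_mul, id_eq, sameCycle_skewProduct_neg_iff] at negComp_iff
    rw [mem_ofPred_eq, negComp_iff]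
    rfl
  · simp [skewProduct, signed]
  · simp [signed]

lemma IsMatchingOn.cNeg_symLift [Fintype X] (h : IsMatchingOn (posInterval (2 * n)) u v)
    (hτ : IsNoncrossingLegs u (v ∘ τ)) (ε : X → ℤˣ) :
    cNeg n (symLift ε u v) = {K | cycleProd τ ε K = -1}.ncard :=
  (h.compsOf_symLift_sep_ncard hτ ε id).trans (ncard_cyclesProj_preimage_eq_neg_one τ ε)

lemma IsMatchingOn.cCount_symLift [Finite X] (h : IsMatchingOn (posInterval (2 * n)) u v)
    (hτ : IsNoncrossingLegs u (v ∘ τ)) (ε : X → ℤˣ) :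
    cCount n (symLift ε u v) = Nat.card (Cycles τ) := by
  have := Fintype.ofFinite X
  have ncard_pos := ncard_cyclesProj_preimage_ne_neg_one τ ε
  rw [cCount, h.cNeg_symLift hτ, h.compsOf_symLift_sep_ncard hτ ε Not, ncard_pos,
    Nat.mul_div_cancel_left _ two_pos]
  exact ncard_add_ncard_compl _

lemma IsMatchingOn.natCard_eq [Finite X] (h : IsMatchingOn (posInterval (2 * n)) u v) :
    Nat.card X = n := by
  have card_labels := Nat.card_range_of_injective h.injective
  rw [h.range_eq, Nat.card_sum] at card_labels
  have card_interval : Nat.card (posInterval (2 * n)) = 2 * n := by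
    change (Icc 1 ((2 * n : ℕ) : ℤ)).ncard = 2 * n
    rw [Set.ncard_eq_toFinset_card', toFinset_Icc, Int.card_Icc, add_sub_cancel_right,
      Int.toNat_natCast]
  omega

end SymmetricLifts

section ForgettingSigns

variable {n : ℕ} {π : Set (Set ℤ)}

/-- The partition of `{1,…,2n}` obtained from a symmetric partition of `[±2n]` by forgetting
signs. -/
def absPairs (π : Set (Set ℤ)) : Set (Set ℤ) := image abs '' π

lemma image_abs_negSet (B : Set ℤ) : abs '' negSet B = abs '' B := by
  simp only [negSet, image_image, abs_neg]

lemma P2sym.exists_abs_ne (h : P2sym n π) {B : Set ℤ} (hB : B ∈ π) :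
    ∃ a b : ℤ, |a| ≠ |b| ∧ B = {a, b} := by
  obtain ⟨a, b, hab, rfl⟩ := h.2.1 B hB
  refine ⟨a, b, fun habs => ?_, rfl⟩
  rcases abs_eq_abs.1 habs with heq | rfl
  · exact hab heq
  · exact h.2.2.2 _ hB (by rw [negSet_pair, neg_neg, pair_comm])

lemma P2sym.p2on_absPairs (h : P2sym n π) : P2on (2 * n) (absPairs π) := by
  refine ⟨⟨?_, fun x hx => ?_⟩, ?_⟩
  · rintro _ ⟨B, hB, rfl⟩
    obtain ⟨hBS, hne⟩ := h.1.1 B hB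
    exact ⟨image_subset_iff.2 (pmSet_eq_preimage_abs (2 * n) ▸ hBS), hne.image _⟩
  · have habs : |x| = x := abs_of_pos (zero_lt_one.trans_le hx.1)
    obtain ⟨B, ⟨hB, hxB⟩, -⟩ := h.1.2 x (by rwa [pmSet_eq_preimage_abs, mem_preimage, habs])
    refine ⟨_, ⟨⟨B, hB, rfl⟩, x, hxB, habs⟩, ?_⟩
    rintro _ ⟨⟨C, hC, rfl⟩, y, hy, hyx⟩
    rcases abs_eq_abs.1 (hyx.trans habs.symm) with rfl | rfl
    · rw [h.1.eq_of_mem hC hB hy hxB]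
    · rw [← image_abs_negSet C, h.1.eq_of_mem (h.2.2.1 C hC) hB (mem_negSet.2 hy) hxB]
  · rintro _ ⟨B, hB, rfl⟩
    obtain ⟨a, b, hab, rfl⟩ := h.exists_abs_ne hB
    exact ⟨|a|, |b|, hab, image_pair _ a b⟩

variable {X : Type*} {m : ℕ} {u v : X → ℤ}

lemma IsMatchingOn.absPairs_symLift (h : IsMatchingOn (posInterval m) u v) (ε : X → ℤˣ) :
    absPairs (symLift ε u v) = pairsOf u v := by
  rw [absPairs, symLift, pairsOf, ← range_comp]
  refine Eq.trans (congrArg range (funext fun z => ?_)) (Prod.fst_surjective.range_comp _)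
  rw [comp_apply, image_pair, comp_apply, abs_signed h.left_pos, abs_signed h.right_pos]
  rfl

lemma IsMatchingOn.exists_signed_mem (h : IsMatchingOn (posInterval (2 * n)) u v)
    (hπ : P2sym n π) (habs : absPairs π = pairsOf u v) (x : X) :
    ∃ s, {signed u (x, s), v x} ∈ π := by
  have hv : |v x| = v x := abs_of_pos (h.right_pos x)
  have hvS : v x ∈ posInterval (2 * n) := h.range_eq ▸ ⟨.inr x, rfl⟩
  obtain ⟨B, ⟨hB, hvB⟩, -⟩ := hπ.1.2 (v x) (by rwa [pmSet_eq_preimage_abs, mem_preimage, hv])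
  have image_eq : abs '' B = {u x, v x} :=
    h.isPartitionOn.eq_of_mem (habs ▸ ⟨B, hB, rfl⟩) ⟨x, rfl⟩ ⟨v x, hvB, hv⟩ (.inr rfl)
  obtain ⟨a, haB, ha⟩ : u x ∈ abs '' B := image_eq ▸ mem_insert _ _
  obtain ⟨s, rfl⟩ := exists_signed_eq ha
  exact ⟨s, (hπ.2.1 B hB).eq_pair haB hvB (h.signed_ne x s) ▸ hB⟩

lemma IsMatchingOn.symLift_injective (h : IsMatchingOn (posInterval m) u v) :
    Injective fun ε => symLift ε u v := by
  intro ε δ heq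
  funext x
  have pair_eq : ({signed u (x, ε x), v x} : Set ℤ) = {signed u (x, δ x), v x} :=
    (h.isPartitionOn_symLift (ε := δ)).eq_of_mem (Eq.subset heq (pair_mem_symLift x))
      (pair_mem_symLift x) (mem_insert_of_mem _ rfl) (mem_insert_of_mem _ rfl)
  rcases Eq.subset pair_eq (mem_insert _ _) with hx | hx
  · have hu := (Sum.elim_injective.1 h.injective).1
    exact congrArg Prod.snd (signed_injective h.left_pos hu hx)
  · exact absurd hx (h.signed_ne x (ε x))

lemma IsMatchingOn.bijOn_symLift (h : IsMatchingOn (posInterval (2 * n)) u v) :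
    BijOn (fun ε => symLift ε u v) univ {π | P2sym n π ∧ absPairs π = pairsOf u v} := by
  refine ⟨fun ε _ => ⟨h.p2sym_symLift ε, h.absPairs_symLift ε⟩, h.symLift_injective.injOn, ?_⟩
  rintro π ⟨hπ, habs⟩
  choose ε hε using h.exists_signed_mem hπ habs
  exact ⟨ε, trivial, h.isPartitionOn_symLift.eq_of_subset hπ.1 (symLift_subset hπ.2.2.1 hε)⟩

end ForgettingSigns

section Counting

lemma finite_setOf_isPartitionOn {S : Set ℤ} (hS : S.Finite) : {π | IsPartitionOn S π}.Finite :=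
  hS.finite_subsets.finite_subsets.subset fun _ hπ B hB => (hπ.1 B hB).1

lemma finite_setOf_p2sym (n : ℕ) : {π | P2sym n π}.Finite :=
  (finite_setOf_isPartitionOn <| (finite_Icc (-(2 * n : ℕ) : ℤ) (2 * n : ℕ)).subset fun _ h =>
    abs_le.1 h.2).subset fun _ hπ => hπ.1

lemma finite_setOf_p2on (m : ℕ) : {σ | P2on m σ}.Finite :=
  (finite_setOf_isPartitionOn (finite_Icc (1 : ℤ) m)).subset fun _ hσ => hσ.1

variable {R : Type*} [CommSemiring R]

lemma sum_symLift {X : Type*} [Fintype X] [DecidableEq X] {n : ℕ} {u v : X → ℤ}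
    (h : IsMatchingOn (posInterval (2 * n)) u v) (qp qm : R) :
    ∑ ε : X → ℤˣ, qm ^ cNeg n (symLift ε u v) * qp ^ (n - cCount n (symLift ε u v))
      = (1 + qm) ^ c2Count (2 * n) (pairsOf u v)
        * (2 * qp) ^ (n - c2Count (2 * n) (pairsOf u v)) := by
  obtain ⟨τ, hτ⟩ := exists_isNoncrossingLegs h.lt
  simp_rw [h.cNeg_symLift hτ, h.cCount_symLift hτ, c2Count_pairsOf h hτ, ← Finset.sum_mul]
  rw [sum_pow_ncard_fiberProd_eq_neg_one Quotient.mk_surjective, h.natCard_eq, mul_pow]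
  ring

lemma finsum_p2sym_fiber {n : ℕ} {σ : Set (Set ℤ)} (hσ : P2on (2 * n) σ) (qp qm : R) :
    ∑ᶠ π ∈ {π | P2sym n π ∧ absPairs π = σ}, qm ^ cNeg n π * qp ^ (n - cCount n π)
      = (1 + qm) ^ c2Count (2 * n) σ * (2 * qp) ^ (n - c2Count (2 * n) σ) := by
  classical
  obtain ⟨v, h, hv⟩ := exists_isMatchingOn hσ.1 hσ.2
  have := h.finite (finite_Icc (1 : ℤ) (2 * n : ℕ))
  have := Fintype.ofFinite (leftLegs σ)
  rw [← hv, ← finsum_mem_eq_of_bijOn _ h.bijOn_symLift fun _ _ => rfl, finsum_mem_univ,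
    finsum_eq_sum_of_fintype, sum_symLift h]

theorem symmetric_vs_plain_pair_partitions_general (n : ℕ) (qp qm : R) :
    (∑ᶠ π ∈ {π : Set (Set ℤ) | P2sym n π}, qm ^ cNeg n π * qp ^ (n - cCount n π))
      = ∑ᶠ π ∈ {π : Set (Set ℤ) | P2on (2 * n) π},
          (1 + qm) ^ c2Count (2 * n) π * (2 * qp) ^ (n - c2Count (2 * n) π) := by
  have fibers : {π | P2sym n π}
      = ⋃ σ ∈ {σ | P2on (2 * n) σ}, {π | P2sym n π ∧ absPairs π = σ} := by
    ext π
    simp only [mem_ofPred_eq, mem_iUnion₂, exists_prop]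
    exact ⟨fun hπ => ⟨_, hπ.p2on_absPairs, hπ, rfl⟩, fun ⟨_, _, hπ, _⟩ => hπ⟩
  have disjoint : {σ | P2on (2 * n) σ}.PairwiseDisjoint
      fun σ => {π | P2sym n π ∧ absPairs π = σ} :=
    fun σ _ σ' _ hne => disjoint_left.2 fun π hπ hπ' => hne (hπ.2.symm.trans hπ'.2)
  rw [fibers, finsum_mem_biUnion disjoint (finite_setOf_p2on _) fun σ _ =>
    (finite_setOf_p2sym n).subset fun π hπ => hπ.1]
  exact finsum_mem_congr rfl fun σ hσ => finsum_p2sym_fiber hσ qp qm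

end Counting

/-- for every n and all q₊,q₋,
Σ_{π∈P₂^{sym}(2n)} q₋^{c₋(π)} q₊^{l_c(π)} = Σ_{π∈P₂(2n)} (1+q₋)^{c(π)} (2q₊)^{n−c(π)},
where l_c(π) = n − c(π) on the left-hand side. -/
theorem symmetric_vs_plain_pair_partitions (n : ℕ) (qp qm : ℂ) :
    (∑ᶠ π ∈ {π : Set (Set ℤ) | P2sym n π}, qm ^ cNeg n π * qp ^ (n - cCount n π))
      = ∑ᶠ π ∈ {π : Set (Set ℤ) | P2on (2 * n) π},
          (1 + qm) ^ c2Count (2 * n) π * (2 * qp) ^ (n - c2Count (2 * n) π) :=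
  symmetric_vs_plain_pair_partitions_general n qp qm

end TypeB
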